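/- arXiv:2308.01114 — 2 statements merged into one kernel-verified Lean document; each statement's English description precedes it below -/
import Mathlib

section
/- Let G' = {p ∈ (OnePoint ℂ) × (OnePoint ℂ) : p.1 ≠ p.2} be the complement of the diagonal in the square of the Riemann sphere, equipped with the subspace topology. Then G' is not homeomorphic to ℂ × ℂ. (This is the topological content of Theorem 3.2(b) of the paper: G is not biholomorphic to ℂ².) -/
/-!
The antipodal map `σ` of the sphere has no fixed points, so `x ↦ (x, σ x)` embeds the sphere as a
retract of the complement of the diagonal. If that complement were contractible, the sphere would
be too, and every line bundle on it would have a nowhere vanishing section: a small step along a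
homotopy of projections keeps such a section, because of two projections at distance less than one
each is injective on the range of the other. For the tautological line bundle on `ℂP¹`, each of the
two coordinates of such a section vanishes at most at one pole. Pulled back to the plane by the
stereographic projection from that pole, the coordinates have a quotient that extends the identity
of the unit circle to a nowhere vanishing function on `ℂ`; a continuous logarithm of this extension
rules that out.
-/

open Complex ComplexConjugate Metric

section Retract

variable {X Y : Type*} [TopologicalSpace X] [TopologicalSpace Y]

theorem contractibleSpace_of_leftInverse [ContractibleSpace Y] (i : C(X, Y)) (r : C(Y, X))
    (h : Function.LeftInverse r i) : ContractibleSpace X := by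
  rw [contractible_iff_id_nullhomotopic]
  have hid : ContinuousMap.id X = r.comp ((ContinuousMap.id Y).comp i) := by
    ext x
    exact (h x).symm
  rw [hid]
  exact ((id_nullhomotopic Y).comp_left i).comp_right r

theorem contractibleSpace_of_contractibleSpace_offDiag [ContractibleSpace {p : X × X // p.1 ≠ p.2}]
    (σ : C(X, X)) (hσ : ∀ x, σ x ≠ x) : ContractibleSpace X :=
  contractibleSpace_of_leftInverse (Y := {p : X × X // p.1 ≠ p.2})
    ⟨fun x ↦ ⟨(x, σ x), (hσ x).symm⟩, by fun_prop⟩ ⟨fun p ↦ p.1.1, by fun_prop⟩ fun _ ↦ rfl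

end Retract

section NonvanishingSection

variable {𝕜 V T X : Type*} [NontriviallyNormedField 𝕜] [NormedAddCommGroup V] [NormedSpace 𝕜 V]
  [TopologicalSpace T] [TopologicalSpace X]

/-- `v` is a nowhere vanishing section of the vector bundle over `X` whose fibre at `x` is the
range of the projection `P x`. Fibres are encoded by the equation `P x w = w`, which describes
the range as soon as `P x` is idempotent. -/
def IsNonvanishingSection (P : C(X, V →L[𝕜] V)) (v : C(X, V)) : Prop :=
  ∀ x, v x ≠ 0 ∧ P x (v x) = v x

theorem IsNonvanishingSection.exists_of_dist_lt_one {P Q : C(X, V →L[𝕜] V)} {v : C(X, V)}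
    (hv : IsNonvanishingSection P v) (hQ : ∀ x, IsIdempotentElem (Q x))
    (hPQ : ∀ x, dist (P x) (Q x) < 1) : ∃ w, IsNonvanishingSection Q w := by
  refine ⟨⟨fun x ↦ Q x (v x), by fun_prop⟩, fun x ↦ ⟨fun hQv : Q x (v x) = 0 ↦ ?_, ?_⟩⟩
  · obtain ⟨hv0, hPv⟩ := hv x
    have hle : ‖v x‖ ≤ dist (P x) (Q x) * ‖v x‖ := by
      simpa [dist_eq_norm, hPv, hQv] using (P x - Q x).le_opNorm (v x)
    nlinarith [hPQ x, norm_pos_iff.2 hv0]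
  · exact DFunLike.congr_fun (hQ x).eq (v x)

theorem exists_isNonvanishingSection_of_preconnectedSpace [PreconnectedSpace T] [CompactSpace X]
    (P : C(T, C(X, V →L[𝕜] V))) (hP : ∀ t x, IsIdempotentElem (P t x)) {s : T}
    (hs : ∃ v, IsNonvanishingSection (P s) v) (t : T) : ∃ v, IsNonvanishingSection (P t) v := by
  refine PreconnectedSpace.induction₂' (fun s t ↦ (∃ v, IsNonvanishingSection (P s) v) →
    ∃ v, IsNonvanishingSection (P t) v) (fun s ↦ ?_) ⟨fun _ _ _ h h' ↦ h' ∘ h⟩ s t hs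
  filter_upwards [P.continuous.continuousAt.preimage_mem_nhds (ball_mem_nhds (P s) one_pos)]
    with t (ht : dist (P t) (P s) < 1)
  have hts (x : X) : dist (P t x) (P s x) < 1 := (ContinuousMap.dist_apply_le_dist x).trans_lt ht
  exact ⟨fun ⟨_, hv⟩ ↦ hv.exists_of_dist_lt_one (hP t) fun x ↦ dist_comm (P t x) (P s x) ▸ hts x,
    fun ⟨_, hv⟩ ↦ hv.exists_of_dist_lt_one (hP s) hts⟩

theorem exists_isNonvanishingSection [CompactSpace X] [ContractibleSpace X]
    (P : C(X, V →L[𝕜] V)) (hP : ∀ x, IsIdempotentElem (P x)) (hP0 : ∀ x, P x ≠ 0) :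
    ∃ v, IsNonvanishingSection P v := by
  obtain ⟨y, ⟨F⟩⟩ := id_nullhomotopic X
  obtain ⟨u, hu⟩ : ∃ u, P y u ≠ 0 := DFunLike.ne_iff.1 (hP0 y)
  let Q : C(unitInterval, C(X, V →L[𝕜] V)) := ⟨fun t ↦ P.comp (F.curry t), by fun_prop⟩
  have hQ1 : ∃ v, IsNonvanishingSection (Q 1) v :=
    ⟨.const X (P y u), fun x ↦ ⟨hu, by simpa [Q] using DFunLike.congr_fun (hP y).eq u⟩⟩
  simpa [Q] using exists_isNonvanishingSection_of_preconnectedSpace Q (fun t x ↦ hP _) hQ1 0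

end NonvanishingSection

theorem exists_continuous_exp_eq {X : Type*} [TopologicalSpace X] [SimplyConnectedSpace X]
    [LocallyPathConnectedSpace X] {f : X → ℂ} (hf : Continuous f) (hf0 : ∀ x, f x ≠ 0) :
    ∃ g : X → ℂ, Continuous g ∧ ∀ x, exp (g x) = f x := by
  obtain ⟨x₀⟩ : Nonempty X := inferInstance
  obtain ⟨g, ⟨-, hg⟩, -⟩ := isCoveringMapOn_exp.existsUnique_continuousMap_lifts
    ⟨f, hf⟩ (exp_log (hf0 x₀)) hf0
  exact ⟨g, g.continuous, congrFun hg⟩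

theorem exists_eq_zero_of_eq_self_on_unit_circle {f : ℂ → ℂ} (hf : Continuous f)
    (hf_circle : ∀ z, ‖z‖ = 1 → f z = z) : ∃ z, f z = 0 := by
  by_contra! hf0
  obtain ⟨g, hg, hgf⟩ := exists_continuous_exp_eq hf hf0
  have hlift : (fun θ : ℝ ↦ g (exp (θ * I))) = fun θ : ℝ ↦ θ * I + g 1 := by
    refine isCoveringMap_exp.eq_of_comp_eq (by fun_prop) (by fun_prop) ?_ 0 (by simp)
    ext θ
    simp [exp_add, hgf, hf_circle]
  have hperiod : g 1 = 2 * Real.pi * I + g 1 := by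
    simpa using congrFun hlift (2 * Real.pi)
  exact two_pi_I_ne_zero (right_eq_add.1 hperiod)

section BlochSphere

local notation "𝕊²" => sphere (0 : EuclideanSpace ℝ (Fin 3)) 1

theorem mem_sphere_iff_sum_sq_eq_one (x : EuclideanSpace ℝ (Fin 3)) :
    x ∈ sphere 0 1 ↔ x 0 ^ 2 + x 1 ^ 2 + x 2 ^ 2 = 1 := by
  simp [EuclideanSpace.sphere_zero_eq, Fin.sum_univ_three]

/-- The orthogonal projection of a point of the unit sphere to the equatorial plane, with `ℂ` as
that plane. -/
def equatorialPart (x : 𝕊²) : ℂ := ⟨x.1 0, x.1 1⟩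

/-- The height of a point of the unit sphere above the equatorial plane. -/
def heightAboveEquator (x : 𝕊²) : ℝ := x.1 2

@[fun_prop]
theorem continuous_equatorialPart : Continuous equatorialPart := by
  have h : equatorialPart = fun x : 𝕊² ↦ equivRealProdCLM.symm (x.1 0, x.1 1) := rfl
  rw [h]
  fun_prop

@[fun_prop]
theorem continuous_heightAboveEquator : Continuous heightAboveEquator := by
  unfold heightAboveEquator
  fun_prop

theorem heightAboveEquator_neg (x : 𝕊²) : heightAboveEquator (-x) = -heightAboveEquator x :=
  rfl

theorem equatorialPart_mul_conj_add_height_sq (x : 𝕊²) :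
    equatorialPart x * conj (equatorialPart x) + heightAboveEquator x ^ 2 = 1 := by
  rw [mul_conj, normSq_apply]
  have h := (mem_sphere_iff_sum_sq_eq_one x.1).1 x.2
  simp only [equatorialPart, heightAboveEquator]
  norm_cast
  linarith

/-- The projection of `ℂ²` onto the complex line represented by the point `x` of the unit sphere
under the identification of the sphere with `ℂP¹`. With `ζ` the equatorial part of `x` and `t` its
height, its matrix is half of `!![1 + t, ζ; conj ζ, 1 - t]`. -/
noncomputable def blochProjection : C(𝕊², ℂ × ℂ →L[ℂ] ℂ × ℂ) where
  toFun x := (2⁻¹ : ℂ) •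
    (((1 + heightAboveEquator x : ℂ) • ContinuousLinearMap.fst ℂ ℂ ℂ +
        equatorialPart x • ContinuousLinearMap.snd ℂ ℂ ℂ).prod
      (conj (equatorialPart x) • ContinuousLinearMap.fst ℂ ℂ ℂ +
        (1 - heightAboveEquator x : ℂ) • ContinuousLinearMap.snd ℂ ℂ ℂ))
  continuous_toFun := by
    refine continuous_clm_apply.2 fun v ↦ ?_
    simp only [smul_apply, ContinuousLinearMap.prod_apply, add_apply]
    fun_prop

theorem blochProjection_apply (x : 𝕊²) (v : ℂ × ℂ) : blochProjection x v =
    (2⁻¹ * ((1 + heightAboveEquator x) * v.1 + equatorialPart x * v.2),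
      2⁻¹ * (conj (equatorialPart x) * v.1 + (1 - heightAboveEquator x) * v.2)) :=
  rfl

theorem blochProjection_apply_eq_self_iff (x : 𝕊²) (v : ℂ × ℂ) : blochProjection x v = v ↔
    (1 - heightAboveEquator x) * v.1 = equatorialPart x * v.2 ∧
      (1 + heightAboveEquator x) * v.2 = conj (equatorialPart x) * v.1 := by
  rw [blochProjection_apply, Prod.ext_iff]
  grind

theorem isIdempotentElem_blochProjection (x : 𝕊²) : IsIdempotentElem (blochProjection x) := by
  refine ContinuousLinearMap.ext fun v ↦ ?_
  change blochProjection x (blochProjection x v) = blochProjection x v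
  rw [blochProjection_apply_eq_self_iff, blochProjection_apply]
  constructor <;> grind [equatorialPart_mul_conj_add_height_sq x]

theorem blochProjection_ne_zero (x : 𝕊²) : blochProjection x ≠ 0 := by
  intro h
  have h₁ : (1 + heightAboveEquator x : ℂ) = 0 := by
    simpa [blochProjection_apply] using congrArg Prod.fst (DFunLike.congr_fun h (1, 0))
  have h₂ : (1 - heightAboveEquator x : ℂ) = 0 := by
    simpa [blochProjection_apply] using congrArg Prod.snd (DFunLike.congr_fun h (0, 1))
  grind

theorem fst_ne_zero_of_blochProjection_apply_eq_self {x : 𝕊²} {v : ℂ × ℂ} (hv0 : v ≠ 0)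
    (hv : blochProjection x v = v) (hx : -1 < heightAboveEquator x) : v.1 ≠ 0 := by
  intro h
  have hx' : (1 + heightAboveEquator x : ℂ) ≠ 0 := mod_cast (by linarith)
  have hmul : (1 + heightAboveEquator x) * v.2 = 0 := by
    simpa [h] using ((blochProjection_apply_eq_self_iff x v).1 hv).2
  exact hv0 (Prod.ext h ((mul_eq_zero.1 hmul).resolve_left hx'))

theorem snd_ne_zero_of_blochProjection_apply_eq_self {x : 𝕊²} {v : ℂ × ℂ} (hv0 : v ≠ 0)
    (hv : blochProjection x v = v) (hx : heightAboveEquator x < 1) : v.2 ≠ 0 := by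
  intro h
  have hx' : (1 - heightAboveEquator x : ℂ) ≠ 0 := mod_cast (by linarith)
  have hmul : (1 - heightAboveEquator x) * v.1 = 0 := by
    simpa [h] using ((blochProjection_apply_eq_self_iff x v).1 hv).1
  exact hv0 (Prod.ext ((mul_eq_zero.1 hmul).resolve_left hx') h)

/-- The inverse of the stereographic projection from the south pole to the equatorial plane, with
`ℂ` as that plane. -/
noncomputable def stereographicInv : C(ℂ, 𝕊²) where
  toFun z := ⟨(1 + ‖z‖ ^ 2)⁻¹ • !₂[2 * z.re, 2 * z.im, 1 - ‖z‖ ^ 2], by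
    have h : (2 * z.re) ^ 2 + (2 * z.im) ^ 2 + (1 - ‖z‖ ^ 2) ^ 2 = (1 + ‖z‖ ^ 2) ^ 2 := by
      rw [← normSq_eq_norm_sq, normSq_apply]
      ring
    rw [mem_sphere_iff_sum_sq_eq_one]
    simp only [PiLp.smul_apply, smul_eq_mul, mul_pow (1 + ‖z‖ ^ 2)⁻¹, ← mul_add]
    simpa [h] using inv_mul_cancel₀ (show (1 + ‖z‖ ^ 2) ^ 2 ≠ 0 by positivity)⟩
  continuous_toFun := by
    have h (z : ℂ) : 1 + ‖z‖ ^ 2 ≠ 0 := by positivity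
    fun_prop (disch := exact h _)

theorem neg_one_lt_heightAboveEquator_stereographicInv (z : ℂ) :
    -1 < heightAboveEquator (stereographicInv z) := by
  have h : heightAboveEquator (stereographicInv z) = (1 + ‖z‖ ^ 2)⁻¹ * (1 - ‖z‖ ^ 2) := rfl
  rw [h, inv_mul_eq_div, lt_div_iff₀ (by positivity)]
  linarith

theorem coe_stereographicInv_of_norm_eq_one {z : ℂ} (hz : ‖z‖ = 1) :
    (stereographicInv z : EuclideanSpace ℝ (Fin 3)) = !₂[z.re, z.im, 0] := by
  ext i
  fin_cases i <;> norm_num [stereographicInv, hz, ← mul_assoc]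

theorem neg_stereographicInv_neg_of_norm_eq_one {z : ℂ} (hz : ‖z‖ = 1) :
    -stereographicInv (-z) = stereographicInv z := by
  ext i
  rw [coe_neg_sphere, coe_stereographicInv_of_norm_eq_one hz,
    coe_stereographicInv_of_norm_eq_one (by rwa [norm_neg])]
  fin_cases i <;> simp

theorem fst_eq_mul_snd_of_blochProjection_stereographicInv_apply_eq_self {z : ℂ} (hz : ‖z‖ = 1)
    {v : ℂ × ℂ} (hv : blochProjection (stereographicInv z) v = v) : v.1 = z * v.2 := by
  simpa [heightAboveEquator, equatorialPart, coe_stereographicInv_of_norm_eq_one hz] using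
    ((blochProjection_apply_eq_self_iff _ v).1 hv).1

theorem not_isNonvanishingSection_blochProjection (v : C(𝕊², ℂ × ℂ)) :
    ¬ IsNonvanishingSection blochProjection v := by
  intro hv
  have hfst (z : ℂ) : (v (stereographicInv z)).1 ≠ 0 :=
    fst_ne_zero_of_blochProjection_apply_eq_self (hv _).1 (hv _).2
      (neg_one_lt_heightAboveEquator_stereographicInv z)
  have hsnd (z : ℂ) : (v (-stereographicInv (-z))).2 ≠ 0 := by
    refine snd_ne_zero_of_blochProjection_apply_eq_self (hv _).1 (hv _).2 ?_
    rw [heightAboveEquator_neg]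
    linarith [neg_one_lt_heightAboveEquator_stereographicInv (-z)]
  let f (z : ℂ) : ℂ := (v (stereographicInv z)).1 / (v (-stereographicInv (-z))).2
  have hf : Continuous f := Continuous.div (by fun_prop) (by fun_prop) hsnd
  have hf_circle (z : ℂ) (hz : ‖z‖ = 1) : f z = z := by
    rw [div_eq_iff (hsnd z), neg_stereographicInv_neg_of_norm_eq_one hz]
    exact fst_eq_mul_snd_of_blochProjection_stereographicInv_apply_eq_self hz (hv _).2
  obtain ⟨z, hz⟩ := exists_eq_zero_of_eq_self_on_unit_circle hf hf_circle
  exact div_ne_zero (hfst z) (hsnd z) hz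

theorem not_contractibleSpace_sphere : ¬ ContractibleSpace 𝕊² := fun _ ↦
  have ⟨v, hv⟩ := exists_isNonvanishingSection blochProjection isIdempotentElem_blochProjection
    blochProjection_ne_zero
  not_isNonvanishingSection_blochProjection v hv

theorem not_contractibleSpace_offDiag_onePoint :
    ¬ ContractibleSpace {p : OnePoint ℂ × OnePoint ℂ // p.1 ≠ p.2} := by
  intro _
  let e : OnePoint ℂ ≃ₜ 𝕊² := onePointEquivSphereOfFinrankEq (by simp)
  let antipode : C(OnePoint ℂ, OnePoint ℂ) := ⟨fun x ↦ e.symm (-e x), by fun_prop⟩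
  have hantipode (x : OnePoint ℂ) : antipode x ≠ x := fun h ↦
    ne_neg_of_mem_unit_sphere ℝ (e x) (e.symm_apply_eq.1 h).symm
  have : ContractibleSpace (OnePoint ℂ) :=
    contractibleSpace_of_contractibleSpace_offDiag antipode hantipode
  exact not_contractibleSpace_sphere e.symm.contractibleSpace

end BlochSphere

theorem confSphere_not_homeomorphic_to_C2_general (X : Type*) [TopologicalSpace X]
    [ContractibleSpace X] :
    IsEmpty ({p : OnePoint ℂ × OnePoint ℂ // p.1 ≠ p.2} ≃ₜ X) :=
  ⟨fun e ↦ not_contractibleSpace_offDiag_onePoint e.contractibleSpace⟩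

/-- The complement of the diagonal in the square of the Riemann sphere
is not homeomorphic to `ℂ × ℂ`. -/
theorem confSphere_not_homeomorphic_to_C2 :
    IsEmpty ({p : OnePoint ℂ × OnePoint ℂ // p.1 ≠ p.2} ≃ₜ (ℂ × ℂ)) :=
  confSphere_not_homeomorphic_to_C2_general (ℂ × ℂ)
end

section
/- Theorem 4.3 (holomorphic functions on G invariant under the cyclic parabolic group): Let F : ℂ × ℂ → ℂ define a holomorphic function on G. Then F(z + 1, w + 1) = F(z, w) holds for all z, w ∈ ℂ with z ≠ w if and only if there exists an entire function g : ℂ → ℂ such that F(z, w) = g(1/(z − w)) for all z, w ∈ ℂ with z ≠ w. -/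
/-- `F : ℂ × ℂ → ℂ` defines a holomorphic function on
`G = Ĉ² \ diagonal`, expressed in the standard affine charts. -/
def DefinesHolomorphicOnG (F : ℂ × ℂ → ℂ) : Prop :=
  DifferentiableOn ℂ F {p : ℂ × ℂ | p.1 ≠ p.2} ∧
  (∃ F₂ : ℂ × ℂ → ℂ, DifferentiableOn ℂ F₂ {p : ℂ × ℂ | p.1 * p.2 ≠ 1} ∧
    ∀ z v : ℂ, v ≠ 0 → z * v ≠ 1 → F₂ (z, v) = F (z, 1 / v)) ∧
  (∃ F₃ : ℂ × ℂ → ℂ, DifferentiableOn ℂ F₃ {p : ℂ × ℂ | p.1 * p.2 ≠ 1} ∧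
    ∀ u w : ℂ, u ≠ 0 → u * w ≠ 1 → F₃ (u, w) = F (1 / u, w))

/-!
Suppose `F` is invariant under `(z, w) ↦ (z + a, w + a)`, and write `s = z - w`. For fixed `z`, the
functions `s ↦ F (z, z - s)` and `s ↦ F (z + s, z)` are holomorphic at infinity, and invariance
makes them agree at the points `a, 2a, 3a, …`, which accumulate there. Hence they coincide, so
`z ↦ F (z, z - s)` has the period `s` besides the period `a`. By Liouville's theorem it is constant
whenever `s` is not a real multiple of `a`, and by continuity for every `s ≠ 0`. Thus `F (z, w)`
depends only on `s`, and it is an entire function of `1 / s` because `F` is holomorphic at `s = ∞`.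
-/

open Bornology Filter Function Module Set Topology

section Periodic

lemma periodic_apply_sub {V α : Type*} [AddCommGroup V] {F : V × V → α} {a : V}
    (ha : ∀ z w, z ≠ w → F (z + a, w + a) = F (z, w)) {s : V} (hs : s ≠ 0) :
    Periodic (fun z ↦ F (z, z - s)) a := fun z ↦ by
  simp only [add_sub_right_comm]
  exact ha z (z - s) (sub_eq_self.not.2 hs ∘ Eq.symm)

lemma periodic_of_mem_span_int {V α : Type*} [AddCommGroup V] {f : V → α} {s : Set V}
    (hf : ∀ c ∈ s, Periodic f c) {c : V} (hc : c ∈ Submodule.span ℤ s) : Periodic f c := by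
  induction hc using Submodule.span_induction with
  | mem c hc => exact hf c hc
  | zero => exact periodic_with_period_zero f
  | add c d _ _ hc hd => exact hc.add_period hd
  | smul n c _ hc => exact hc.zsmul n

lemma isBounded_range_of_periodic_basis {ι V X : Type*} [Finite ι] [NormedAddCommGroup V]
    [NormedSpace ℝ V] [PseudoMetricSpace X] (b : Basis ι ℝ V) {f : V → X} (hf : Continuous f)
    (hb : ∀ i, Periodic f (b i)) : IsBounded (range f) := by
  cases nonempty_fintype ι
  have : FiniteDimensional ℝ V := b.finiteDimensional_of_finite
  have : ProperSpace V := FiniteDimensional.proper ℝ V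
  have hD : IsCompact (closure (ZSpan.fundamentalDomain b)) :=
    (ZSpan.fundamentalDomain_isBounded b).isCompact_closure
  refine (hD.image hf).isBounded.subset ?_
  rintro _ ⟨x, rfl⟩
  have hfloor : Periodic f (ZSpan.floor b x) :=
    periodic_of_mem_span_int (forall_mem_range.2 hb) (ZSpan.floor b x).2
  exact ⟨ZSpan.fract b x, subset_closure (ZSpan.fract_mem_fundamentalDomain b x), hfloor.sub_eq x⟩

lemma apply_eq_apply_of_differentiable_of_periodic_basis {ι V E : Type*} [Finite ι]
    [NormedAddCommGroup V] [NormedSpace ℂ V] [NormedAddCommGroup E] [NormedSpace ℂ E]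
    (b : Basis ι ℝ V) {f : V → E} (hf : Differentiable ℂ f) (hb : ∀ i, Periodic f (b i))
    (x y : V) : f x = f y :=
  hf.apply_eq_apply_of_bounded (isBounded_range_of_periodic_basis b hf.continuous hb) x y

lemma apply_eq_apply_of_differentiable_of_periodic {E : Type*} [NormedAddCommGroup E]
    [NormedSpace ℂ E] (L : PeriodPair) {f : ℂ → E} (hf : Differentiable ℂ f)
    (h₁ : Periodic f L.ω₁) (h₂ : Periodic f L.ω₂) (x y : ℂ) : f x = f y :=
  apply_eq_apply_of_differentiable_of_periodic_basis L.basis hf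
    (Fin.forall_fin_two.2 ⟨by rwa [L.basis_zero], by rwa [L.basis_one]⟩) x y

end Periodic

section DenseCompl

variable {𝕜 V : Type*} [NontriviallyNormedField 𝕜] [AddCommGroup V] [TopologicalSpace V]
  [ContinuousAdd V] [Module 𝕜 V] [ContinuousSMul 𝕜 V]

lemma dense_compl_of_submodule_ne_top {S : Submodule 𝕜 V} (hS : S ≠ ⊤) : Dense (S : Set V)ᶜ :=
  interior_eq_empty_iff_dense_compl.1 <| not_nonempty_iff_eq_empty.1 fun h ↦
    hS (S.eq_top_of_nonempty_interior' h)

lemma dense_compl_span_singleton (hV : 1 < finrank 𝕜 V) (a : V) :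
    Dense (Submodule.span 𝕜 {a} : Set V)ᶜ := by
  refine dense_compl_of_submodule_ne_top fun h ↦ hV.not_ge ?_
  calc finrank 𝕜 V = finrank 𝕜 (Submodule.span 𝕜 {a}) := by rw [h, finrank_top]
    _ ≤ 1 := by simpa using finrank_span_le_card (R := 𝕜) {a}

end DenseCompl

section HolomorphicAtInfinity

variable {E : Type*} [NormedAddCommGroup E] [NormedSpace ℂ E] [CompleteSpace E] {f g : ℂ → E}

lemma exists_differentiable_apply_inv_eq (hf : DifferentiableOn ℂ f {0}ᶜ)
    (hf' : ∃ y, Tendsto f (cobounded ℂ) (𝓝 y)) :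
    ∃ g : ℂ → E, Differentiable ℂ g ∧ ∀ s ≠ 0, g s⁻¹ = f s := by
  obtain ⟨y, hy⟩ := hf'
  refine ⟨update (fun t ↦ f t⁻¹) 0 y, ?_, fun s hs ↦ by simp [hs]⟩
  rw [← differentiableOn_univ,
    ← Complex.differentiableOn_compl_singleton_and_continuousAt_iff (c := 0) univ_mem,
    ← compl_eq_univ_sdiff]
  constructor
  · have : DifferentiableOn ℂ (fun t ↦ f t⁻¹) {0}ᶜ :=
      hf.comp differentiableOn_inv fun t ht ↦ inv_ne_zero ht
    exact this.congr fun t ht ↦ update_of_ne ht _ _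
  · exact continuousAt_update_same.2 (hy.comp tendsto_inv₀_nhdsNE_zero)

lemma eq_of_frequently_eq_cobounded (hf : DifferentiableOn ℂ f {0}ᶜ)
    (hg : DifferentiableOn ℂ g {0}ᶜ) (hf' : ∃ y, Tendsto f (cobounded ℂ) (𝓝 y))
    (hg' : ∃ y, Tendsto g (cobounded ℂ) (𝓝 y)) (hfg : ∃ᶠ s in cobounded ℂ, f s = g s) {s : ℂ}
    (hs : s ≠ 0) : f s = g s := by
  obtain ⟨φ, hφ, hφf⟩ := exists_differentiable_apply_inv_eq hf hf'
  obtain ⟨ψ, hψ, hψg⟩ := exists_differentiable_apply_inv_eq hg hg'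
  have hφψ : ∃ᶠ t in 𝓝[≠] 0, φ t = ψ t := by
    refine tendsto_inv₀_cobounded'.frequently ?_
    refine (hfg.and_eventually (eventually_ne_cobounded 0)).mono fun s ⟨hs, hs₀⟩ ↦ ?_
    rw [hφf s hs₀, hψg s hs₀, hs]
  have : φ = ψ := (Complex.analyticOnNhd_univ_iff_differentiable.2 hφ).eq_of_frequently_eq
    (Complex.analyticOnNhd_univ_iff_differentiable.2 hψ) hφψ
  rw [← hφf s hs, ← hψg s hs, this]

end HolomorphicAtInfinity

section OffDiagonal

variable {E : Type*} [NormedAddCommGroup E] [NormedSpace ℂ E] {F : ℂ × ℂ → E}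

lemma differentiableOn_apply_sub (hF : DifferentiableOn ℂ F {p | p.1 ≠ p.2}) (z : ℂ) :
    DifferentiableOn ℂ (fun s ↦ F (z, z - s)) {0}ᶜ :=
  hF.comp (f := fun s ↦ (z, z - s)) (by fun_prop) fun _ hs ↦ sub_eq_self.not.2 hs ∘ Eq.symm

variable [CompleteSpace E]

lemma periodic_apply_sub_self (hF : DifferentiableOn ℂ F {p | p.1 ≠ p.2})
    (hsnd : ∀ z, ∃ y, Tendsto (fun w ↦ F (z, w)) (cobounded ℂ) (𝓝 y))
    (hfst : ∀ w, ∃ y, Tendsto (fun z ↦ F (z, w)) (cobounded ℂ) (𝓝 y)) {a : ℂ} (ha₀ : a ≠ 0)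
    (ha : ∀ z w, z ≠ w → F (z + a, w + a) = F (z, w)) {s : ℂ} (hs : s ≠ 0) :
    Periodic (fun z ↦ F (z, z - s)) s := fun z ↦ by
  simp only [add_sub_cancel_right]
  refine eq_of_frequently_eq_cobounded (f := fun s ↦ F (z + s, z)) (g := fun s ↦ F (z, z - s))
    ?_ ?_ ?_ ?_ ?_ hs
  · exact hF.comp (f := fun s ↦ (z + s, z)) (by fun_prop) fun s hs ↦ by simpa using hs
  · exact differentiableOn_apply_sub hF z
  · exact (hfst z).imp fun y hy ↦ hy.comp (tendsto_const_add_cobounded z)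
  · exact (hsnd z).imp fun y hy ↦ hy.comp (tendsto_const_sub_cobounded z)
  · have hmul : Tendsto (fun n : ℕ ↦ (n : ℂ) * a) atTop (cobounded ℂ) :=
      (tendsto_mul_right_cobounded ha₀).comp tendsto_natCast_atTop_cobounded
    refine hmul.frequently ((eventually_ne_atTop 0).mono fun n hn ↦ ?_).frequently
    have hna : (n : ℂ) * a ≠ 0 := mul_ne_zero (Nat.cast_ne_zero.2 hn) ha₀
    simpa using (periodic_apply_sub ha hna).nat_mul n z

lemma apply_sub_eq_apply_sub_of_linearIndependent (hF : DifferentiableOn ℂ F {p | p.1 ≠ p.2})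
    (hsnd : ∀ z, ∃ y, Tendsto (fun w ↦ F (z, w)) (cobounded ℂ) (𝓝 y))
    (hfst : ∀ w, ∃ y, Tendsto (fun z ↦ F (z, w)) (cobounded ℂ) (𝓝 y)) {a : ℂ} {s : ℂ}
    (has : LinearIndependent ℝ ![a, s]) (ha : ∀ z w, z ≠ w → F (z + a, w + a) = F (z, w))
    (z w : ℂ) : F (z, z - s) = F (w, w - s) := by
  have ha₀ : a ≠ 0 := has.ne_zero 0
  have hs₀ : s ≠ 0 := has.ne_zero 1
  have hentire : Differentiable ℂ (fun z ↦ F (z, z - s)) := differentiableOn_univ.1 <|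
    hF.comp (f := fun z ↦ (z, z - s)) (by fun_prop) fun _ _ ↦ sub_eq_self.not.2 hs₀ ∘ Eq.symm
  exact apply_eq_apply_of_differentiable_of_periodic ⟨a, s, has⟩ hentire
    (periodic_apply_sub ha hs₀) (periodic_apply_sub_self hF hsnd hfst ha₀ ha hs₀) z w

lemma apply_sub_eq_apply_sub (hF : DifferentiableOn ℂ F {p | p.1 ≠ p.2})
    (hsnd : ∀ z, ∃ y, Tendsto (fun w ↦ F (z, w)) (cobounded ℂ) (𝓝 y))
    (hfst : ∀ w, ∃ y, Tendsto (fun z ↦ F (z, w)) (cobounded ℂ) (𝓝 y)) {a : ℂ} (ha₀ : a ≠ 0)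
    (ha : ∀ z w, z ≠ w → F (z + a, w + a) = F (z, w)) (z w : ℂ) {s : ℂ} (hs : s ≠ 0) :
    F (z, z - s) = F (w, w - s) := by
  have hgeneric : EqOn (fun s ↦ F (z, z - s)) (fun s ↦ F (w, w - s))
      (Submodule.span ℝ {a} : Set ℂ)ᶜ := fun s hs ↦ by
    have has : LinearIndependent ℝ ![a, s] := (LinearIndependent.pair_iff' ha₀).2 fun c hc ↦
      hs (Submodule.mem_span_singleton.2 ⟨c, hc⟩)
    exact apply_sub_eq_apply_sub_of_linearIndependent hF hsnd hfst has ha z w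
  have hsubset : (Submodule.span ℝ {a} : Set ℂ)ᶜ ⊆ {0}ᶜ :=
    compl_subset_compl.2 (singleton_subset_iff.2 (zero_mem _))
  have hdense : Dense (Submodule.span ℝ {a} : Set ℂ)ᶜ := dense_compl_span_singleton (by simp) a
  exact hgeneric.of_subset_closure (differentiableOn_apply_sub hF z).continuousOn
    (differentiableOn_apply_sub hF w).continuousOn hsubset (fun s _ ↦ hdense s) hs

/-- By Riemann's removable singularity theorem, the limits `hsnd` and `hfst` encode holomorphy along
`w = ∞` and `z = ∞`. -/
theorem invariant_parabolic_iff_general (hF : DifferentiableOn ℂ F {p | p.1 ≠ p.2})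
    (hsnd : ∀ z, ∃ y, Tendsto (fun w ↦ F (z, w)) (cobounded ℂ) (𝓝 y))
    (hfst : ∀ w, ∃ y, Tendsto (fun z ↦ F (z, w)) (cobounded ℂ) (𝓝 y)) {a : ℂ} (ha₀ : a ≠ 0) :
    (∀ z w, z ≠ w → F (z + a, w + a) = F (z, w)) ↔
      ∃ g : ℂ → E, Differentiable ℂ g ∧ ∀ z w, z ≠ w → F (z, w) = g (1 / (z - w)) := by
  refine ⟨fun ha ↦ ?_, fun ⟨g, _, hg⟩ z w hzw ↦ ?_⟩
  · obtain ⟨g, hg, hgF⟩ := exists_differentiable_apply_inv_eq (differentiableOn_apply_sub hF 0)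
      ((hsnd 0).imp fun y hy ↦ hy.comp (tendsto_const_sub_cobounded 0))
    refine ⟨g, hg, fun z w hzw ↦ ?_⟩
    have hs : z - w ≠ 0 := sub_ne_zero.2 hzw
    rw [one_div, hgF _ hs, apply_sub_eq_apply_sub hF hsnd hfst ha₀ ha 0 z hs, sub_sub_cancel]
  · rw [hg z w hzw, hg (z + a) (w + a) (by simpa using hzw), add_sub_add_right_eq_sub]

end OffDiagonal

namespace DefinesHolomorphicOnG

variable {F : ℂ × ℂ → ℂ}

lemma swap (hF : DefinesHolomorphicOnG F) : DefinesHolomorphicOnG (F ∘ Prod.swap) := by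
  obtain ⟨hd, ⟨F₂, hF₂, h₂⟩, F₃, hF₃, h₃⟩ := hF
  have hswap {s t : Set (ℂ × ℂ)} {H : ℂ × ℂ → ℂ} (hH : DifferentiableOn ℂ H s)
      (hst : MapsTo Prod.swap t s) : DifferentiableOn ℂ (H ∘ Prod.swap) t :=
    hH.comp (differentiable_snd.prodMk differentiable_fst).differentiableOn hst
  refine ⟨hswap hd fun p hp ↦ Ne.symm hp,
    ⟨F₃ ∘ Prod.swap, hswap hF₃ fun p hp ↦ ?_, fun z v hv hzv ↦ h₃ v z hv (mul_comm z v ▸ hzv)⟩,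
    ⟨F₂ ∘ Prod.swap, hswap hF₂ fun p hp ↦ ?_, fun u w hu huw ↦ h₂ w u hu (mul_comm u w ▸ huw)⟩⟩
  all_goals simpa [mul_comm] using hp

lemma exists_tendsto_snd (hF : DefinesHolomorphicOnG F) (z : ℂ) :
    ∃ y, Tendsto (fun w ↦ F (z, w)) (cobounded ℂ) (𝓝 y) := by
  obtain ⟨-, ⟨F₂, hF₂, h₂⟩, -⟩ := hF
  have hopen : IsOpen {p : ℂ × ℂ | p.1 * p.2 ≠ 1} := isOpen_ne_fun (by fun_prop) (by fun_prop)
  have hcont : ContinuousAt F₂ (z, 0) :=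
    (hF₂.differentiableAt (hopen.mem_nhds (by simp))).continuousAt
  have hlim : Tendsto (fun w ↦ F₂ (z, w⁻¹)) (cobounded ℂ) (𝓝 (F₂ (z, 0))) :=
    hcont.tendsto.comp (tendsto_const_nhds.prodMk_nhds tendsto_inv₀_cobounded)
  refine ⟨F₂ (z, 0), hlim.congr' ?_⟩
  filter_upwards [eventually_ne_cobounded 0, eventually_ne_cobounded z] with w hw₀ hwz
  have hzw : z * w⁻¹ ≠ 1 := by rwa [← div_eq_mul_inv, Ne, div_eq_one_iff_eq hw₀, eq_comm]
  rw [h₂ z w⁻¹ (inv_ne_zero hw₀) hzw, one_div, inv_inv]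

lemma exists_tendsto_fst (hF : DefinesHolomorphicOnG F) (w : ℂ) :
    ∃ y, Tendsto (fun z ↦ F (z, w)) (cobounded ℂ) (𝓝 y) :=
  hF.swap.exists_tendsto_snd w

end DefinesHolomorphicOnG

/-- Theorem 4.3: a holomorphic function on `G` is invariant under
`(z,w) ↦ (z + 1, w + 1)` iff it has the form `g (1 / (z - w))`
for some entire function `g`. -/
theorem invariant_parabolic_iff (F : ℂ × ℂ → ℂ) (hF : DefinesHolomorphicOnG F) :
    (∀ z w : ℂ, z ≠ w → F (z + 1, w + 1) = F (z, w)) ↔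
    (∃ g : ℂ → ℂ, Differentiable ℂ g ∧
      ∀ z w : ℂ, z ≠ w → F (z, w) = g (1 / (z - w))) :=
  invariant_parabolic_iff_general hF.1 hF.exists_tendsto_snd hF.exists_tendsto_fst one_ne_zero
end
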